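/- Let I_ν, I_π be the score covariance matrices I_p = E_p[∇ log p(X) ∇ log p(X)^⊤], assumed positive definite. The matrix A minimising E_{X∼μ_t}[Var_{Y∼ϱ_{t,X}}(A s_1(X,Y) + (I-A) s_2(Y))] over A ∈ ℝ^{d×d} is A_t* = λ_t^{-1} I_π ((1-λ_t)^{-1} I_ν + λ_t^{-1} I_π)^{-1}, and the objective is convex in A (its Hessian with respect to the entries of A is block diagonal with identical positive-definite blocks 2((1-λ_t)^{-1} I_ν + λ_t^{-1} I_π)). -/

import Mathlib

open MeasureTheory Real

noncomputable section

/-!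
Let `Z ∼ ν` and `Y ∼ p` be independent and `X = √l Y + √(1 - l) Z`. The law `q` of `(X, Y)` is
mapped to `ν ⊗ p` by `(x, y) ↦ ((x - √l y) / √(1 - l), y)`, and under `q` the two estimators of the
score of `X` are `s₁ = ∇ log ν (Z) / √(1 - l)` and `s₂ = ∇ log p (Y) / √l`. They are therefore
uncorrelated, with second moments `(1 - l)⁻¹ I_ν` and `l⁻¹ I_p`. Moreover `∇_y q` equals
`√l q (s₂ - s₁)`, so integrating by parts over `y` shows that `s₁ - s₂` has conditional mean zero
given `X`. Writing `A s₁ + (1 - A) s₂ = s₂ + A (s₁ - s₂)`, the expected conditional variance becomes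
a constant plus `tr (A M Aᵀ) - 2 tr (A (l⁻¹ I_p)ᵀ)` with `M = (1 - l)⁻¹ I_ν + l⁻¹ I_p`; this is
convex, and completing the square shows that it is minimal where `A M = l⁻¹ I_p`.
-/

open scoped Gradient

section DensityMeasure

variable {Ω G : Type*} [MeasurableSpace Ω] [NormedAddCommGroup G] [NormedSpace ℝ G]
  {m : Measure Ω} {w : Ω → ℝ}

/-- The measure with real density `w` with respect to `m`; negative values of `w` count as `0`. -/
def densityMeasure (m : Measure Ω) (w : Ω → ℝ) : Measure Ω :=
  m.withDensity fun ω => ENNReal.ofReal (w ω)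

theorem integral_densityMeasure (hwm : Measurable w) (hw : ∀ ω, 0 ≤ w ω) (f : Ω → G) :
    ∫ ω, f ω ∂densityMeasure m w = ∫ ω, w ω • f ω ∂m := by
  simp only [densityMeasure, integral_withDensity_eq_integral_toReal_smul hwm.ennreal_ofReal
    (.of_forall fun _ => ENNReal.ofReal_lt_top), ENNReal.toReal_ofReal (hw _)]

theorem integrable_densityMeasure_iff (hwm : Measurable w) (hw : ∀ ω, 0 ≤ w ω) {f : Ω → G} :
    Integrable f (densityMeasure m w) ↔ Integrable (fun ω => w ω • f ω) m := by
  simp only [densityMeasure, integrable_withDensity_iff_integrable_smul' hwm.ennreal_ofReal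
    (.of_forall fun _ => ENNReal.ofReal_lt_top), ENNReal.toReal_ofReal (hw _)]

theorem isFiniteMeasure_densityMeasure (hwi : Integrable w m) :
    IsFiniteMeasure (densityMeasure m w) :=
  isFiniteMeasure_withDensity_ofReal hwi.2

theorem isProbabilityMeasure_densityMeasure (hw : ∀ ω, 0 ≤ w ω) (hw1 : ∫ ω, w ω ∂m = 1) :
    IsProbabilityMeasure (densityMeasure m w) where
  measure_univ := by
    have hwi : Integrable w m := .of_integral_ne_zero (by simp [hw1])
    rw [densityMeasure, withDensity_apply _ .univ, Measure.restrict_univ,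
      ← ofReal_integral_eq_lintegral_ofReal hwi (.of_forall hw), hw1, ENNReal.ofReal_one]

theorem measurePreserving_withDensity {Ω' : Type*} [MeasurableSpace Ω'] {m' : Measure Ω'}
    {T : Ω → Ω'} (hT : MeasurePreserving T m m') {g : Ω' → ENNReal} (hg : Measurable g) :
    MeasurePreserving T (m.withDensity (g ∘ T)) (m'.withDensity g) where
  measurable := hT.measurable
  map_eq := by
    ext s hs
    rw [Measure.map_apply hT.measurable hs, withDensity_apply _ (hT.measurable hs),
      withDensity_apply _ hs, ← hT.setLIntegral_comp_preimage hs hg]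
    rfl

end DensityMeasure

theorem integrable_inner_of_memLp_two {Ω E : Type*} [MeasurableSpace Ω] {P : Measure Ω}
    [NormedAddCommGroup E] [InnerProductSpace ℝ E] {u v : Ω → E} (hu : MemLp u 2 P)
    (hv : MemLp v 2 P) : Integrable (fun ω => inner ℝ (u ω) (v ω)) P :=
  memLp_one_iff_integrable.1 ((innerSL ℝ).memLp_of_bilin 1 hu hv)

section WeightedVariance

variable {Y E : Type*} [MeasurableSpace Y] [NormedAddCommGroup E] [InnerProductSpace ℝ E]
  {n : Measure Y} {w : Y → ℝ} {u v : Y → E}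

/-- The total variance (trace of the covariance matrix) of the vector `u` when the sampling
distribution has density `w` with respect to `n`. -/
def weightedVariance (n : Measure Y) (w : Y → ℝ) (u : Y → E) : ℝ :=
  (∫ y, w y * ‖u y‖ ^ 2 ∂n) - ‖∫ y, w y • u y ∂n‖ ^ 2

theorem weightedVariance_nonneg [CompleteSpace E] (hw : ∀ y, 0 ≤ w y) (hw1 : ∫ y, w y ∂n = 1)
    (hu : Integrable (fun y => w y • u y) n) (huu : Integrable (fun y => w y * ‖u y‖ ^ 2) n) :
    0 ≤ weightedVariance n w u := by
  set c := ∫ y, w y • u y ∂n with hc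
  have hwi : Integrable w n := .of_integral_ne_zero (by simp [hw1])
  have expand (y : Y) : w y * ‖u y - c‖ ^ 2 =
      w y * ‖u y‖ ^ 2 - 2 * inner ℝ c (w y • u y) + w y * ‖c‖ ^ 2 := by
    rw [norm_sub_sq_real, real_inner_comm, real_inner_smul_right]
    ring
  have hcu := (hu.const_inner (𝕜 := ℝ) c).const_mul 2
  have hsub : Integrable (fun y => w y * ‖u y‖ ^ 2 - 2 * inner ℝ c (w y • u y)) n := huu.sub hcu
  calc 0 ≤ ∫ y, w y * ‖u y - c‖ ^ 2 ∂n :=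
        integral_nonneg fun y => mul_nonneg (hw y) (sq_nonneg _)
    _ = (∫ y, w y * ‖u y‖ ^ 2 ∂n) - 2 * inner ℝ c c + 1 * ‖c‖ ^ 2 := by
        simp only [expand]
        rw [integral_add hsub (hwi.mul_const _), integral_sub huu hcu, integral_const_mul,
          integral_inner hu, integral_mul_const, hw1]
    _ = weightedVariance n w u := by
        rw [weightedVariance, ← hc, real_inner_self_eq_norm_sq]
        ring

theorem weightedVariance_add_of_integral_eq_zero (hu : Integrable (fun y => w y • u y) n)
    (hv : Integrable (fun y => w y • v y) n) (huu : Integrable (fun y => w y * ‖u y‖ ^ 2) n)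
    (huv : Integrable (fun y => w y * (2 * inner ℝ (u y) (v y) + ‖v y‖ ^ 2)) n)
    (hv0 : ∫ y, w y • v y ∂n = 0) :
    weightedVariance n w (fun y => u y + v y) =
      weightedVariance n w u + ∫ y, w y * (2 * inner ℝ (u y) (v y) + ‖v y‖ ^ 2) ∂n := by
  simp only [weightedVariance, norm_add_sq_real, smul_add, add_assoc, mul_add (w _) (‖u _‖ ^ 2)]
  rw [integral_add hu hv, hv0, add_zero, integral_add huu huv]
  ring

end WeightedVariance

section Disintegration

variable {X Y G : Type*} [MeasurableSpace Y] [NormedAddCommGroup G] [NormedSpace ℝ G]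
  {n : Measure Y} {q : X → Y → ℝ}

/-- The density of the first coordinate under the joint density `q`. -/
def marginalDensity (n : Measure Y) (q : X → Y → ℝ) (x : X) : ℝ :=
  ∫ y, q x y ∂n

/-- The density of the second coordinate given the first under the joint density `q`; it is
identically `0` on the fibres where the marginal density vanishes. -/
def conditionalDensity (n : Measure Y) (q : X → Y → ℝ) (x : X) (y : Y) : ℝ :=
  q x y / marginalDensity n q x

theorem integral_conditionalDensity_smul (x : X) (f : Y → G) :
    ∫ y, conditionalDensity n q x y • f y ∂n =
      (marginalDensity n q x)⁻¹ • ∫ y, q x y • f y ∂n := by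
  simp only [conditionalDensity, div_eq_inv_mul, mul_smul, integral_smul]

variable [MeasurableSpace X] {m : Measure X} {f : X × Y → G}

/-- The joint distribution on `X × Y` with density `q`. -/
abbrev jointMeasure (m : Measure X) (n : Measure Y) (q : X → Y → ℝ) : Measure (X × Y) :=
  densityMeasure (m.prod n) (Function.uncurry q)

theorem integrable_jointMeasure_iff (hqm : Measurable (Function.uncurry q))
    (hq : ∀ x y, 0 ≤ q x y) :
    Integrable f (jointMeasure m n q) ↔ Integrable (fun z => q z.1 z.2 • f z) (m.prod n) :=
  integrable_densityMeasure_iff hqm fun z => hq z.1 z.2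

variable [SFinite n]

theorem aestronglyMeasurable_integral_conditionalDensity_smul
    (hqm : Measurable (Function.uncurry q)) (hq : ∀ x y, 0 ≤ q x y)
    (hqi : Integrable (Function.uncurry q) (m.prod n)) (hf : Integrable f (jointMeasure m n q)) :
    AEStronglyMeasurable (fun x => ∫ y, conditionalDensity n q x y • f (x, y) ∂n) m := by
  rw [integrable_jointMeasure_iff hqm hq] at hf
  have hμ : AEMeasurable (marginalDensity n q) m := hqi.integral_prod_left.aemeasurable
  simp only [integral_conditionalDensity_smul _ fun y => f (_, y)]
  exact hμ.inv.aestronglyMeasurable.smul hf.integral_prod_left.aestronglyMeasurable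

variable [SFinite m]

theorem integrable_conditionalDensity_smul_ae (hqm : Measurable (Function.uncurry q))
    (hq : ∀ x y, 0 ≤ q x y) (hf : Integrable f (jointMeasure m n q)) :
    ∀ᵐ x ∂m, Integrable (fun y => conditionalDensity n q x y • f (x, y)) n := by
  filter_upwards [((integrable_jointMeasure_iff hqm hq).1 hf).prod_right_ae] with x hx
  simp only [conditionalDensity, div_eq_inv_mul, mul_smul]
  exact hx.smul (marginalDensity n q x)⁻¹

variable [NeZero n]

theorem marginalDensity_pos_ae (hq : ∀ x y, 0 < q x y)
    (hqi : Integrable (Function.uncurry q) (m.prod n)) : ∀ᵐ x ∂m, 0 < marginalDensity n q x := by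
  filter_upwards [hqi.prod_right_ae] with x hx
  have hsupp : Function.support (q x) = Set.univ :=
    Set.eq_univ_of_forall fun y => (hq x y).ne'
  refine (integral_pos_iff_support_of_nonneg (fun y => (hq x y).le) hx).2 ?_
  simpa only [hsupp] using Measure.measure_univ_pos.2 (NeZero.ne n)

theorem integral_conditionalDensity_ae (hq : ∀ x y, 0 < q x y)
    (hqi : Integrable (Function.uncurry q) (m.prod n)) :
    ∀ᵐ x ∂m, ∫ y, conditionalDensity n q x y ∂n = 1 := by
  filter_upwards [marginalDensity_pos_ae hq hqi] with x hx
  simp only [conditionalDensity, integral_div]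
  exact div_self hx.ne'

theorem marginalDensity_smul_integral_conditionalDensity_ae (hq : ∀ x y, 0 < q x y)
    (hqi : Integrable (Function.uncurry q) (m.prod n)) (f : X × Y → G) :
    ∀ᵐ x ∂m, marginalDensity n q x • ∫ y, conditionalDensity n q x y • f (x, y) ∂n =
      ∫ y, q x y • f (x, y) ∂n := by
  filter_upwards [marginalDensity_pos_ae hq hqi] with x hx
  rw [integral_conditionalDensity_smul, smul_inv_smul₀ hx.ne']

theorem integrable_marginalDensity_smul_integral_conditionalDensity
    (hqm : Measurable (Function.uncurry q)) (hq : ∀ x y, 0 < q x y)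
    (hqi : Integrable (Function.uncurry q) (m.prod n)) (hf : Integrable f (jointMeasure m n q)) :
    Integrable (fun x =>
      marginalDensity n q x • ∫ y, conditionalDensity n q x y • f (x, y) ∂n) m := by
  rw [integrable_jointMeasure_iff hqm fun x y => (hq x y).le] at hf
  exact hf.integral_prod_left.congr
    ((marginalDensity_smul_integral_conditionalDensity_ae hq hqi f).mono fun _ h => h.symm)

theorem integral_marginalDensity_smul_integral_conditionalDensity
    (hqm : Measurable (Function.uncurry q)) (hq : ∀ x y, 0 < q x y)
    (hqi : Integrable (Function.uncurry q) (m.prod n)) (hf : Integrable f (jointMeasure m n q)) :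
    ∫ x, marginalDensity n q x • ∫ y, conditionalDensity n q x y • f (x, y) ∂n ∂m =
      ∫ z, f z ∂jointMeasure m n q := by
  rw [integral_congr_ae (marginalDensity_smul_integral_conditionalDensity_ae hq hqi f),
    integral_densityMeasure hqm fun z => (hq z.1 z.2).le]
  rw [integrable_jointMeasure_iff hqm fun x y => (hq x y).le] at hf
  exact (integral_prod _ hf).symm

end Disintegration

section ExpectedConditionalVariance

variable {X Y E : Type*} [MeasurableSpace X] [MeasurableSpace Y] [NormedAddCommGroup E]
  [InnerProductSpace ℝ E] {m : Measure X} {n : Measure Y} {q : X → Y → ℝ} {u v : X × Y → E}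

/-- The expectation of the conditional total variance of `u` given the first coordinate, under the
joint density `q`. -/
def expectedConditionalVariance (m : Measure X) (n : Measure Y) (q : X → Y → ℝ)
    (u : X × Y → E) : ℝ :=
  ∫ x, marginalDensity n q x *
    weightedVariance n (conditionalDensity n q x) (fun y => u (x, y)) ∂m

variable [CompleteSpace E] [SFinite m] [SFinite n] [NeZero n]

theorem integrable_marginalDensity_mul_weightedVariance
    (hqm : Measurable (Function.uncurry q)) (hq : ∀ x y, 0 < q x y)
    (hqi : Integrable (Function.uncurry q) (m.prod n))
    (hu : MemLp u 2 (jointMeasure m n q)) :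
    Integrable (fun x => marginalDensity n q x *
      weightedVariance n (conditionalDensity n q x) (fun y => u (x, y))) m := by
  have := isFiniteMeasure_densityMeasure hqi
  have hq0 (x y) : 0 ≤ q x y := (hq x y).le
  have hu1 := hu.integrable one_le_two
  have huu := hu.integrable_norm_pow two_ne_zero
  have hμ : AEStronglyMeasurable (marginalDensity n q) m := hqi.integral_prod_left.1
  have hmean := aestronglyMeasurable_integral_conditionalDensity_smul hqm hq0 hqi hu1
  have hsq := aestronglyMeasurable_integral_conditionalDensity_smul hqm hq0 hqi huu
  refine (integrable_marginalDensity_smul_integral_conditionalDensity hqm hq hqi huu).mono'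
    (hμ.mul (hsq.sub (hmean.norm.pow 2))) ?_
  filter_upwards [marginalDensity_pos_ae hq hqi, integral_conditionalDensity_ae hq hqi,
    integrable_conditionalDensity_smul_ae hqm hq0 hu1,
    integrable_conditionalDensity_smul_ae hqm hq0 huu] with x hμx h1 hux huux
  have hnonneg : 0 ≤ weightedVariance n (conditionalDensity n q x) (fun y => u (x, y)) :=
    weightedVariance_nonneg (fun y => (div_pos (hq x y) hμx).le) h1 hux huux
  rw [norm_of_nonneg (mul_nonneg hμx.le hnonneg)]
  exact mul_le_mul_of_nonneg_left (sub_le_self _ (sq_nonneg _)) hμx.le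

theorem expectedConditionalVariance_add_of_condMean_eq_zero
    (hqm : Measurable (Function.uncurry q)) (hq : ∀ x y, 0 < q x y)
    (hqi : Integrable (Function.uncurry q) (m.prod n))
    (hu : MemLp u 2 (jointMeasure m n q))
    (hv : MemLp v 2 (jointMeasure m n q))
    (hv0 : ∀ᵐ x ∂m, ∫ y, q x y • v (x, y) ∂n = 0) :
    expectedConditionalVariance m n q (fun z => u z + v z) =
      expectedConditionalVariance m n q u +
        ∫ z, (2 * inner ℝ (u z) (v z) + ‖v z‖ ^ 2) ∂jointMeasure m n q := by
  have := isFiniteMeasure_densityMeasure hqi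
  have hq0 (x y) : 0 ≤ q x y := (hq x y).le
  have hu1 := hu.integrable one_le_two
  have hv1 := hv.integrable one_le_two
  have huu := hu.integrable_norm_pow two_ne_zero
  have huv : Integrable (fun z => 2 * inner ℝ (u z) (v z) + ‖v z‖ ^ 2)
      (jointMeasure m n q) :=
    ((integrable_inner_of_memLp_two hu hv).const_mul 2).add
      (hv.integrable_norm_pow two_ne_zero)
  rw [← integral_marginalDensity_smul_integral_conditionalDensity hqm hq hqi huv,
    expectedConditionalVariance, expectedConditionalVariance,
    ← integral_add (integrable_marginalDensity_mul_weightedVariance hqm hq hqi hu)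
      (integrable_marginalDensity_smul_integral_conditionalDensity hqm hq hqi huv)]
  apply integral_congr_ae
  filter_upwards [hv0, integrable_conditionalDensity_smul_ae hqm hq0 hu1,
    integrable_conditionalDensity_smul_ae hqm hq0 hv1,
    integrable_conditionalDensity_smul_ae hqm hq0 huu,
    integrable_conditionalDensity_smul_ae hqm hq0 huv] with x hv0x hux hvx huux huvx
  have hmean : ∫ y, conditionalDensity n q x y • v (x, y) ∂n = 0 := by
    rw [integral_conditionalDensity_smul, hv0x, smul_zero]
  rw [weightedVariance_add_of_integral_eq_zero hux hvx huux huvx hmean, mul_add]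
  rfl

end ExpectedConditionalVariance

section TraceQuadratic

open Matrix

variable {ι κ : Type*} [Fintype ι] [Fintype κ] {M : Matrix κ κ ℝ} {A₀ B : Matrix ι κ ℝ}

/-- The matrix quadratic function `A ↦ tr (A M Aᵀ) - 2 tr (A Bᵀ)`, with quadratic part `M` and
linear part `B`. -/
def traceQuadratic (M : Matrix κ κ ℝ) (B A : Matrix ι κ ℝ) : ℝ :=
  (A * M * Aᵀ).trace - 2 * (A * Bᵀ).trace

theorem traceQuadratic_eq_add_trace (hM : M.IsSymm) (h : A₀ * M = B) (A : Matrix ι κ ℝ) :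
    traceQuadratic M B A = traceQuadratic M B A₀ + ((A - A₀) * M * (A - A₀)ᵀ).trace := by
  have hB : M * A₀ᵀ = Bᵀ := by rw [← h, transpose_mul, hM.eq]
  have hswap (C : Matrix ι κ ℝ) : (B * Cᵀ).trace = (C * Bᵀ).trace := by
    rw [← trace_transpose, transpose_mul, transpose_transpose]
  simp only [traceQuadratic, transpose_sub, Matrix.sub_mul, Matrix.mul_sub, h, trace_sub, hswap]
  rw [Matrix.mul_assoc A M A₀ᵀ, hB]
  ring

theorem trace_mul_mul_transpose_nonneg (hM : M.PosSemidef) (A : Matrix ι κ ℝ) :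
    0 ≤ (A * M * Aᵀ).trace := by
  simpa using (hM.mul_mul_conjTranspose_same A).trace_nonneg

theorem traceQuadratic_le (hM : M.PosSemidef) (h : A₀ * M = B) (A : Matrix ι κ ℝ) :
    traceQuadratic M B A₀ ≤ traceQuadratic M B A := by
  rw [traceQuadratic_eq_add_trace (isHermitian_iff_isSymm.1 hM.isHermitian) h A]
  exact le_add_of_nonneg_right (trace_mul_mul_transpose_nonneg hM _)

theorem convexOn_traceQuadratic (hM : M.PosSemidef) (B : Matrix ι κ ℝ) :
    ConvexOn ℝ Set.univ (traceQuadratic M B) := by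
  refine ⟨convex_univ, fun A _ C _ a b ha hb hab => ?_⟩
  have hAC := mul_nonneg (mul_nonneg ha hb) (trace_mul_mul_transpose_nonneg hM (A - C))
  obtain rfl : b = 1 - a := by linarith
  simp only [traceQuadratic, transpose_sub, transpose_add, transpose_smul, Matrix.sub_mul,
    Matrix.mul_sub, Matrix.add_mul, Matrix.mul_add, Matrix.smul_mul, Matrix.mul_smul, trace_sub,
    trace_add, trace_smul, smul_eq_mul] at hAC ⊢
  linear_combination hAC

end TraceQuadratic

section MomentMatrix

open Matrix

variable {Ω Ω' ι κ τ : Type*} [MeasurableSpace Ω] [MeasurableSpace Ω'] {P : Measure Ω}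

/-- The matrix `E[u vᵀ]` of mixed second moments of two random vectors. -/
def momentMatrix (P : Measure Ω) (u : Ω → EuclideanSpace ℝ ι) (v : Ω → EuclideanSpace ℝ κ) :
    Matrix ι κ ℝ :=
  Matrix.of fun i j => ∫ ω, u ω i * v ω j ∂P

variable {u u' : Ω → EuclideanSpace ℝ ι} {v : Ω → EuclideanSpace ℝ κ}

theorem momentMatrix_transpose : (momentMatrix P u v)ᵀ = momentMatrix P v u := by
  ext i j
  simp only [momentMatrix, transpose_apply, of_apply, mul_comm]

theorem momentMatrix_smul_smul (a b : ℝ) :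
    momentMatrix P (fun ω => a • u ω) (fun ω => b • v ω) = (a * b) • momentMatrix P u v := by
  ext i j
  simp only [momentMatrix, of_apply, Matrix.smul_apply, PiLp.smul_apply, smul_eq_mul,
    mul_mul_mul_comm a, integral_const_mul]

theorem momentMatrix_comp_measurePreserving {Q : Measure Ω'} {T : Ω → Ω'}
    (hT : MeasurePreserving T P Q) {u : Ω' → EuclideanSpace ℝ ι} {v : Ω' → EuclideanSpace ℝ κ}
    (hu : AEStronglyMeasurable u Q) (hv : AEStronglyMeasurable v Q) :
    momentMatrix P (fun ω => u (T ω)) (fun ω => v (T ω)) = momentMatrix Q u v := by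
  ext i j
  have huv : AEStronglyMeasurable (fun ω => u ω i * v ω j) (P.map T) := by
    rw [hT.map_eq]
    exact ((PiLp.continuous_apply 2 _ i).comp_aestronglyMeasurable hu).mul
      ((PiLp.continuous_apply 2 _ j).comp_aestronglyMeasurable hv)
  simp only [momentMatrix, of_apply]
  rw [← integral_map hT.aemeasurable huv, hT.map_eq]

variable [Fintype ι]

theorem momentMatrix_prod_eq_zero_of_integral_eq_zero [SFinite P] {Q : Measure Ω'} [SFinite Q]
    {v : Ω' → EuclideanSpace ℝ κ} (hu : Integrable u P) (hu0 : ∫ ω, u ω ∂P = 0) :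
    momentMatrix (P.prod Q) (fun ω => u ω.1) (fun ω => v ω.2) = 0 := by
  ext i j
  have hi : ∫ ω, u ω i ∂P = 0 := by
    rw [← eval_integral_piLp hu.eval_piLp, hu0, PiLp.zero_apply]
  simp only [momentMatrix, of_apply, Matrix.zero_apply]
  rw [integral_prod_mul (fun ω => u ω i) fun ω => v ω j, hi, zero_mul]

variable [Fintype κ]

theorem integrable_apply_mul_apply (hu : MemLp u 2 P) (hv : MemLp v 2 P) (i : ι) (j : κ) :
    Integrable (fun ω => u ω i * v ω j) P :=
  (hu.eval_piLp i).integrable_mul (hv.eval_piLp j)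

theorem momentMatrix_sub_left (hu : MemLp u 2 P) (hu' : MemLp u' 2 P) (hv : MemLp v 2 P) :
    momentMatrix P (fun ω => u ω - u' ω) v = momentMatrix P u v - momentMatrix P u' v := by
  ext i j
  simp only [momentMatrix, of_apply, Matrix.sub_apply, PiLp.sub_apply, sub_mul]
  exact integral_sub (integrable_apply_mul_apply hu hv i j) (integrable_apply_mul_apply hu' hv i j)

theorem momentMatrix_sub_right (hv : MemLp v 2 P) (hu : MemLp u 2 P) (hu' : MemLp u' 2 P) :
    momentMatrix P v (fun ω => u ω - u' ω) = momentMatrix P v u - momentMatrix P v u' := by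
  rw [← momentMatrix_transpose, momentMatrix_sub_left hu hu' hv, transpose_sub,
    momentMatrix_transpose, momentMatrix_transpose]

theorem momentMatrix_sub_right_of_uncorrelated {v : Ω → EuclideanSpace ℝ ι} (hu : MemLp u 2 P)
    (hv : MemLp v 2 P) (huv : momentMatrix P u v = 0) :
    momentMatrix P v (fun ω => u ω - v ω) = -momentMatrix P v v := by
  rw [momentMatrix_sub_right hv hu hv, ← momentMatrix_transpose (u := u), huv, transpose_zero,
    zero_sub]

theorem momentMatrix_sub_sub_of_uncorrelated {v : Ω → EuclideanSpace ℝ ι} (hu : MemLp u 2 P)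
    (hv : MemLp v 2 P) (huv : momentMatrix P u v = 0) :
    momentMatrix P (fun ω => u ω - v ω) (fun ω => u ω - v ω) =
      momentMatrix P u u + momentMatrix P v v := by
  have huv' : MemLp (fun ω => u ω - v ω) 2 P := hu.sub hv
  rw [momentMatrix_sub_left hu hv huv', momentMatrix_sub_right hu hu hv, huv,
    momentMatrix_sub_right_of_uncorrelated hu hv huv, sub_zero, sub_neg_eq_add]

theorem integral_inner_eq_trace_momentMatrix (hu : MemLp u 2 P) (hu' : MemLp u' 2 P) :
    ∫ ω, inner ℝ (u ω) (u' ω) ∂P = (momentMatrix P u' u).trace := by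
  simp only [PiLp.inner_apply, RCLike.inner_apply, conj_trivial, trace, diag_apply, momentMatrix,
    of_apply]
  exact integral_finsetSum _ fun i _ => integrable_apply_mul_apply hu' hu i i

variable [DecidableEq κ]

theorem memLp_toEuclideanLin (hv : MemLp v 2 P) (A : Matrix ι κ ℝ) :
    MemLp (fun ω => toEuclideanLin A (v ω)) 2 P :=
  (LinearMap.toContinuousLinearMap (toEuclideanLin A)).comp_memLp' hv

theorem momentMatrix_toEuclideanLin_left (hv : MemLp v 2 P) (hu : MemLp u 2 P)
    (A : Matrix τ κ ℝ) :
    momentMatrix P (fun ω => toEuclideanLin A (v ω)) u = A * momentMatrix P v u := by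
  ext i j
  simp only [momentMatrix, of_apply, mul_apply, Matrix.ofLp_toLpLin, Matrix.toLin'_apply, mulVec,
    dotProduct, Finset.sum_mul, mul_assoc]
  rw [integral_finsetSum _ fun k _ => (integrable_apply_mul_apply hv hu k j).const_mul _]
  simp only [integral_const_mul]

theorem momentMatrix_toEuclideanLin_right (hu : MemLp u 2 P) (hv : MemLp v 2 P)
    (A : Matrix τ κ ℝ) :
    momentMatrix P u (fun ω => toEuclideanLin A (v ω)) = momentMatrix P u v * Aᵀ := by
  rw [← momentMatrix_transpose, momentMatrix_toEuclideanLin_left hv hu, transpose_mul,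
    momentMatrix_transpose]

theorem integral_inner_toEuclideanLin_add_norm_sq (hu : MemLp u 2 P) (hv : MemLp v 2 P)
    (A : Matrix ι κ ℝ) :
    ∫ ω, (2 * inner ℝ (u ω) (toEuclideanLin A (v ω)) + ‖toEuclideanLin A (v ω)‖ ^ 2) ∂P =
      traceQuadratic (momentMatrix P v v) (-momentMatrix P u v) A := by
  have hAv := memLp_toEuclideanLin hv A
  simp only [← real_inner_self_eq_norm_sq]
  rw [integral_add ((integrable_inner_of_memLp_two hu hAv).const_mul 2)
      (integrable_inner_of_memLp_two hAv hAv), integral_const_mul,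
    integral_inner_eq_trace_momentMatrix hu hAv, integral_inner_eq_trace_momentMatrix hAv hAv,
    momentMatrix_toEuclideanLin_left hv hu, momentMatrix_toEuclideanLin_left hv hAv,
    momentMatrix_toEuclideanLin_right hv hv, traceQuadratic, transpose_neg,
    momentMatrix_transpose, Matrix.mul_neg, trace_neg, Matrix.mul_assoc]
  ring

end MomentMatrix

section Score

variable {E : Type*} [NormedAddCommGroup E] [InnerProductSpace ℝ E] [FiniteDimensional ℝ E]
  {f : E → ℝ}

/-- The score `∇ log f` of the density `f`. -/
def score (f : E → ℝ) : E → E :=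
  ∇ fun z => Real.log (f z)

theorem hasGradientAt_smul_score {z : E} (hf : DifferentiableAt ℝ f z) (hz : f z ≠ 0) :
    HasGradientAt f (f z • score f z) z := by
  convert hf.hasGradientAt using 1
  rw [score, (hf.hasFDerivAt.log hz).hasGradientAt.gradient, map_smulₛₗ, gradient]
  simp [smul_inv_smul₀ hz]

variable [MeasurableSpace E] {μ : Measure E}

/-- A differentiable positive probability density, with respect to `μ`, whose score is square
integrable. -/
structure HasFiniteFisherInformation (μ : Measure E) (f : E → ℝ) : Prop where
  differentiable : Differentiable ℝ f
  pos : ∀ z, 0 < f z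
  integral_eq_one : ∫ z, f z ∂μ = 1
  memLp_score : MemLp (score f) 2 (densityMeasure μ f)

theorem HasFiniteFisherInformation.isProbabilityMeasure (hf : HasFiniteFisherInformation μ f) :
    IsProbabilityMeasure (densityMeasure μ f) :=
  isProbabilityMeasure_densityMeasure (fun z => (hf.pos z).le) hf.integral_eq_one

theorem HasFiniteFisherInformation.integrable_score (hf : HasFiniteFisherInformation μ f) :
    Integrable (score f) (densityMeasure μ f) :=
  have := hf.isProbabilityMeasure
  hf.memLp_score.integrable one_le_two

variable [BorelSpace E]

theorem measurable_score (f : E → ℝ) : Measurable (score f) :=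
  (InnerProductSpace.toDual ℝ E).symm.continuous.measurable.comp (measurable_fderiv ℝ _)

theorem integral_gradient_eq_zero [μ.IsAddHaarMeasure] (hf : Differentiable ℝ f)
    (hfi : Integrable f μ) (hf' : Integrable (∇ f) μ) : ∫ z, ∇ f z ∂μ = 0 := by
  refine ext_inner_left ℝ fun v => ?_
  have hv : Integrable (fun z => fderiv ℝ f z v) μ := by
    simpa only [← inner_gradient_left] using hf'.inner_const v
  have hparts := integral_mul_fderiv_eq_neg_fderiv_mul_of_integrable (μ := μ)
    (f := fun _ => (1 : ℝ)) (g := f) (v := v) (by simp) (by simpa using hv) (by simpa using hfi)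
    (fun _ _ => differentiableAt_const _) fun _ _ => hf _
  rw [← integral_inner hf', inner_zero_right]
  simpa [inner_gradient_right] using hparts

namespace HasFiniteFisherInformation

theorem measurable (hf : HasFiniteFisherInformation μ f) : Measurable f :=
  hf.differentiable.continuous.measurable

theorem integral_score_eq_zero [μ.IsAddHaarMeasure] (hf : HasFiniteFisherInformation μ f) :
    ∫ z, score f z ∂densityMeasure μ f = 0 := by
  have hf0 (z : E) : 0 ≤ f z := (hf.pos z).le
  have hgrad (z : E) : f z • score f z = ∇ f z :=
    (hasGradientAt_smul_score (hf.differentiable z) (hf.pos z).ne').gradient.symm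
  have hint := (integrable_densityMeasure_iff hf.measurable hf0).1 hf.integrable_score
  simp only [integral_densityMeasure hf.measurable hf0, hgrad] at hint ⊢
  exact integral_gradient_eq_zero hf.differentiable
    (.of_integral_ne_zero (by simp [hf.integral_eq_one])) hint

end HasFiniteFisherInformation

end Score

section ScoreCovariance

variable {ι : Type*} [Fintype ι] {f : EuclideanSpace ℝ ι → ℝ}

/-- The score covariance (Fisher information) matrix `∫ f (∇ log f) (∇ log f)ᵀ` of the density
`f`. -/
def scoreCovariance (f : EuclideanSpace ℝ ι → ℝ) : Matrix ι ι ℝ :=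
  Matrix.of fun i j => ∫ z, f z * (score f z i * score f z j)

theorem HasFiniteFisherInformation.momentMatrix_score
    (hf : HasFiniteFisherInformation volume f) :
    momentMatrix (densityMeasure volume f) (score f) (score f) = scoreCovariance f := by
  ext i j
  simp only [momentMatrix, scoreCovariance, Matrix.of_apply,
    integral_densityMeasure hf.measurable fun z => (hf.pos z).le, smul_eq_mul]

theorem hasFiniteFisherInformation_of_posDef (hf : Differentiable ℝ f) (hpos : ∀ z, 0 < f z)
    (hf1 : ∫ z, f z = 1) (hI : (scoreCovariance f).PosDef) :
    HasFiniteFisherInformation volume f where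
  differentiable := hf
  pos := hpos
  integral_eq_one := hf1
  memLp_score := .of_eval_piLp fun i => by
    have hmeas : Measurable fun z => score f z i :=
      (PiLp.continuous_apply 2 _ i).measurable.comp (measurable_score f)
    rw [memLp_two_iff_integrable_sq hmeas.aestronglyMeasurable]
    -- A nonzero diagonal entry can only come from a convergent integral.
    refine .of_integral_ne_zero ?_
    simpa only [integral_densityMeasure hf.continuous.measurable fun z => (hpos z).le,
      smul_eq_mul, sq, scoreCovariance, Matrix.of_apply] using hI.diag_pos.ne'

end ScoreCovariance

section Interpolation

variable {E : Type*} [NormedAddCommGroup E] [InnerProductSpace ℝ E]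
  {l : ℝ} {ν p : E → ℝ}

/-- The noise `z` for which the interpolant `x = √l y + √(1 - l) z` of the data point `y` takes the
value `x`. -/
def interpolationNoise (l : ℝ) (x y : E) : E :=
  (√(1 - l))⁻¹ • (x - √l • y)

/-- The joint density of the interpolant `X = √l Y + √(1 - l) Z` and the data point `Y`, where
`Z ∼ ν` and `Y ∼ p` are independent. -/
def jointDensity (l : ℝ) (ν p : E → ℝ) (x y : E) : ℝ :=
  (1 - l) ^ (-(Module.finrank ℝ E : ℝ) / 2) * ν (interpolationNoise l x y) * p y

theorem jointDensity_pos (hl : l < 1) (hνpos : ∀ z, 0 < ν z) (hppos : ∀ z, 0 < p z) (x y : E) :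
    0 < jointDensity l ν p x y :=
  mul_pos (mul_pos (rpow_pos_of_pos (sub_pos.2 hl) _) (hνpos _)) (hppos y)

variable [FiniteDimensional ℝ E]

/-- The estimator `s₁` of the score of the interpolant: the score in `x` of its density given the
data point `y`. -/
def noiseScore (l : ℝ) (ν : E → ℝ) (x y : E) : E :=
  (√(1 - l))⁻¹ • score ν (interpolationNoise l x y)

/-- The estimator `s₂` of the score of the interpolant: the rescaled score of the data density. -/
def dataScore (l : ℝ) (p : E → ℝ) (y : E) : E :=
  (√l)⁻¹ • score p y

theorem hasGradientAt_jointDensity (hl : l ∈ Set.Ioo (0 : ℝ) 1) (hν : Differentiable ℝ ν)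
    (hp : Differentiable ℝ p) (hνpos : ∀ z, 0 < ν z) (hppos : ∀ z, 0 < p z) (x y : E) :
    HasGradientAt (jointDensity l ν p x)
      (√l • jointDensity l ν p x y • (dataScore l p y - noiseScore l ν x y)) y := by
  have hnoise : HasFDerivAt (interpolationNoise l x)
      ((√(1 - l))⁻¹ • (0 - √l • ContinuousLinearMap.id ℝ E)) y :=
    ((hasFDerivAt_const x y).sub ((hasFDerivAt_id y).const_smul √l)).const_smul (√(1 - l))⁻¹
  have hνy := (hasGradientAt_smul_score (hν _) (hνpos (interpolationNoise l x y)).ne').hasFDerivAt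
  have hpy := (hasGradientAt_smul_score (hp y) (hppos y).ne').hasFDerivAt
  have hq := ((hνy.comp y hnoise).const_mul ((1 - l) ^ (-(Module.finrank ℝ E : ℝ) / 2))).mul hpy
  have hb : √l ≠ 0 := (sqrt_pos.2 hl.1).ne'
  rw [hasGradientAt_iff_hasFDerivAt]
  refine hq.congr_fderiv (ContinuousLinearMap.ext fun w => ?_)
  simp only [jointDensity, dataScore, noiseScore, Function.comp_apply, map_smul, map_sub, zero_sub,
    smul_neg, ContinuousLinearMap.comp_neg, ContinuousLinearMap.comp_smul,
    ContinuousLinearMap.comp_id, add_apply, sub_apply, smul_apply, neg_apply, smul_eq_mul,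
    InnerProductSpace.toDual_apply_apply]
  field_simp
  ring

variable [MeasurableSpace E] [BorelSpace E] {μ : Measure E} [μ.IsAddHaarMeasure]

theorem measurable_interpolationNoise :
    Measurable fun z : E × E => interpolationNoise l z.1 z.2 :=
  (measurable_fst.sub (measurable_snd.const_smul √l)).const_smul (√(1 - l))⁻¹

theorem measurable_jointDensity (hν : Measurable ν) (hp : Measurable p) :
    Measurable (Function.uncurry (jointDensity l ν p)) :=
  ((hν.comp measurable_interpolationNoise).const_mul _).mul (hp.comp measurable_snd)

theorem map_interpolationNoise (hl : l < 1) (y : E) :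
    μ.map (fun x => interpolationNoise l x y) =
      ENNReal.ofReal |((√(1 - l))⁻¹ ^ Module.finrank ℝ E)⁻¹| • μ := by
  have ha : (√(1 - l))⁻¹ ≠ 0 := inv_ne_zero (sqrt_pos.2 (sub_pos.2 hl)).ne'
  rw [← Measure.map_addHaar_smul μ ha, ← (measurePreserving_sub_right μ (√l • y)).map_eq,
    Measure.map_map (measurable_const_smul _) (measurable_sub_const _),
    (measurePreserving_sub_right μ (√l • y)).map_eq]
  rfl

theorem measurePreserving_interpolationNoise_prod (hl : l < 1) :
    MeasurePreserving (fun z : E × E => (interpolationNoise l z.1 z.2, z.2)) (μ.prod μ)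
      ((ENNReal.ofReal |((√(1 - l))⁻¹ ^ Module.finrank ℝ E)⁻¹| • μ).prod μ) :=
  Measure.measurePreserving_swap.comp
    (((MeasurePreserving.id μ).skew_product (g := fun y x => interpolationNoise l x y)
      (measurable_interpolationNoise.comp measurable_swap)
      (.of_forall (map_interpolationNoise hl))).comp Measure.measurePreserving_swap)

theorem abs_inv_sqrt_pow_mul_rpow (hl : l < 1) (k : ℕ) :
    |((√(1 - l))⁻¹ ^ k)⁻¹| * (1 - l) ^ (-(k : ℝ) / 2) = 1 := by
  have hpos : 0 < 1 - l := sub_pos.2 hl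
  rw [abs_of_nonneg (by positivity), inv_pow, inv_inv, sqrt_eq_rpow, ← rpow_mul_natCast hpos.le,
    ← rpow_add hpos]
  ring_nf
  exact rpow_zero _

theorem measurePreserving_interpolationNoise (hl : l < 1) (hν : Measurable ν) (hp : Measurable p)
    (hνpos : ∀ z, 0 ≤ ν z) :
    MeasurePreserving (fun z : E × E => (interpolationNoise l z.1 z.2, z.2))
      (jointMeasure μ μ (jointDensity l ν p)) ((densityMeasure μ ν).prod (densityMeasure μ p)) := by
  set c := (1 - l) ^ (-(Module.finrank ℝ E : ℝ) / 2)
  have hc : 0 ≤ c := rpow_nonneg (sub_pos.2 hl).le _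
  have hνp : Measurable fun z : E × E => ENNReal.ofReal (ν z.1) * ENNReal.ofReal (p z.2) :=
    (hν.comp measurable_fst).ennreal_ofReal.mul (hp.comp measurable_snd).ennreal_ofReal
  convert measurePreserving_withDensity (measurePreserving_interpolationNoise_prod (μ := μ) hl)
    (hνp.const_smul (ENNReal.ofReal c)) using 1
  · simp only [densityMeasure, Function.comp_def, Function.uncurry_def, jointDensity, Pi.smul_apply,
      smul_eq_mul, ENNReal.ofReal_mul (hνpos _), ENNReal.ofReal_mul hc, mul_assoc, c]
  · rw [withDensity_smul _ hνp, ← prod_withDensity hν.ennreal_ofReal hp.ennreal_ofReal,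
      withDensity_smul_measure, Measure.prod_smul_left, smul_smul, ← ENNReal.ofReal_mul hc,
      mul_comm c, abs_inv_sqrt_pow_mul_rpow hl, ENNReal.ofReal_one, one_smul]
    rfl

theorem measurePreserving_interpolationNoise_fst (hl : l < 1)
    (hν : HasFiniteFisherInformation μ ν) (hp : HasFiniteFisherInformation μ p) :
    MeasurePreserving (fun z : E × E => interpolationNoise l z.1 z.2)
      (jointMeasure μ μ (jointDensity l ν p)) (densityMeasure μ ν) :=
  have := hp.isProbabilityMeasure
  measurePreserving_fst.comp
    (measurePreserving_interpolationNoise hl hν.measurable hp.measurable fun z => (hν.pos z).le)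

theorem measurePreserving_snd_jointMeasure (hl : l < 1) (hν : HasFiniteFisherInformation μ ν)
    (hp : HasFiniteFisherInformation μ p) :
    MeasurePreserving Prod.snd (jointMeasure μ μ (jointDensity l ν p)) (densityMeasure μ p) :=
  have := hν.isProbabilityMeasure
  have := hp.isProbabilityMeasure
  have hjoint := measurePreserving_interpolationNoise (μ := μ) hl hν.measurable hp.measurable
    fun z => (hν.pos z).le
  (measurePreserving_snd.comp hjoint :)

theorem isProbabilityMeasure_jointMeasure (hl : l < 1) (hν : HasFiniteFisherInformation μ ν)
    (hp : HasFiniteFisherInformation μ p) :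
    IsProbabilityMeasure (jointMeasure μ μ (jointDensity l ν p)) := by
  have hdata := measurePreserving_snd_jointMeasure hl hν hp
  have := hp.isProbabilityMeasure
  rw [← hdata.map_eq] at this
  exact Measure.isProbabilityMeasure_of_map Prod.snd

theorem integrable_jointDensity (hl : l < 1) (hν : HasFiniteFisherInformation μ ν)
    (hp : HasFiniteFisherInformation μ p) :
    Integrable (Function.uncurry (jointDensity l ν p)) (μ.prod μ) := by
  have := isProbabilityMeasure_jointMeasure hl hν hp
  simpa [Function.uncurry_def] using (integrable_jointMeasure_iff
    (measurable_jointDensity hν.measurable hp.measurable)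
    fun x y => (jointDensity_pos hl hν.pos hp.pos x y).le).1
    (integrable_const (μ := jointMeasure μ μ (jointDensity l ν p)) (1 : ℝ))

theorem memLp_noiseScore (hl : l < 1) (hν : HasFiniteFisherInformation μ ν)
    (hp : HasFiniteFisherInformation μ p) :
    MemLp (fun z : E × E => noiseScore l ν z.1 z.2) 2
      (jointMeasure μ μ (jointDensity l ν p)) :=
  (hν.memLp_score.comp_measurePreserving
    (measurePreserving_interpolationNoise_fst hl hν hp)).const_smul _

theorem memLp_dataScore (hl : l < 1) (hν : HasFiniteFisherInformation μ ν)
    (hp : HasFiniteFisherInformation μ p) :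
    MemLp (fun z : E × E => dataScore l p z.2) 2 (jointMeasure μ μ (jointDensity l ν p)) :=
  (hp.memLp_score.comp_measurePreserving
    (measurePreserving_snd_jointMeasure hl hν hp)).const_smul _

theorem integrable_jointDensity_smul_noiseScore_sub_dataScore_ae (hl : l < 1)
    (hν : HasFiniteFisherInformation μ ν) (hp : HasFiniteFisherInformation μ p) :
    ∀ᵐ x ∂μ, Integrable
      (fun y => jointDensity l ν p x y • (noiseScore l ν x y - dataScore l p y)) μ := by
  have := isProbabilityMeasure_jointMeasure hl hν hp
  have hdiff := ((memLp_noiseScore hl hν hp).sub (memLp_dataScore hl hν hp)).integrable one_le_two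
  exact ((integrable_jointMeasure_iff (measurable_jointDensity hν.measurable hp.measurable)
    fun x y => (jointDensity_pos hl hν.pos hp.pos x y).le).1 hdiff).prod_right_ae

theorem integral_jointDensity_smul_noiseScore_sub_dataScore_ae (hl : l ∈ Set.Ioo (0 : ℝ) 1)
    (hν : HasFiniteFisherInformation μ ν) (hp : HasFiniteFisherInformation μ p) :
    ∀ᵐ x ∂μ, ∫ y, jointDensity l ν p x y • (noiseScore l ν x y - dataScore l p y) ∂μ = 0 := by
  filter_upwards [(integrable_jointDensity hl.2 hν hp).prod_right_ae,
    integrable_jointDensity_smul_noiseScore_sub_dataScore_ae hl.2 hν hp] with x hqx hdiffx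
  have hb : -√l ≠ 0 := neg_ne_zero.2 (sqrt_pos.2 hl.1).ne'
  have hq := hasGradientAt_jointDensity hl hν.differentiable hp.differentiable hν.pos hp.pos x
  have hgrad : ∇ (jointDensity l ν p x) = fun y =>
      -√l • jointDensity l ν p x y • (noiseScore l ν x y - dataScore l p y) := by
    ext1 y
    rw [(hq y).gradient, ← neg_sub (noiseScore l ν x y), smul_neg, smul_neg, neg_smul]
  have hzero := integral_gradient_eq_zero (fun y => (hq y).differentiableAt) hqx
    (hgrad ▸ hdiffx.smul (-√l))
  rw [hgrad, integral_smul] at hzero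
  exact (smul_eq_zero_iff_right hb).1 hzero

end Interpolation

section InterpolationMoments

variable {ι : Type*} [Fintype ι] {l : ℝ} {ν p : EuclideanSpace ℝ ι → ℝ}

theorem momentMatrix_noiseScore (hl : l < 1) (hν : HasFiniteFisherInformation volume ν)
    (hp : HasFiniteFisherInformation volume p) :
    momentMatrix (jointMeasure volume volume (jointDensity l ν p))
      (fun z => noiseScore l ν z.1 z.2) (fun z => noiseScore l ν z.1 z.2) =
      (1 - l)⁻¹ • scoreCovariance ν := by
  have hs := hν.memLp_score.aestronglyMeasurable
  rw [← hν.momentMatrix_score, ←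
    momentMatrix_comp_measurePreserving (measurePreserving_interpolationNoise_fst hl hν hp) hs hs]
  simp only [noiseScore, momentMatrix_smul_smul, ← mul_inv,
    mul_self_sqrt (sub_pos.2 hl).le]

theorem momentMatrix_dataScore (hl : l ∈ Set.Ioo (0 : ℝ) 1)
    (hν : HasFiniteFisherInformation volume ν) (hp : HasFiniteFisherInformation volume p) :
    momentMatrix (jointMeasure volume volume (jointDensity l ν p))
      (fun z => dataScore l p z.2) (fun z => dataScore l p z.2) =
      l⁻¹ • scoreCovariance p := by
  have hs := hp.memLp_score.aestronglyMeasurable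
  rw [← hp.momentMatrix_score, ←
    momentMatrix_comp_measurePreserving (measurePreserving_snd_jointMeasure hl.2 hν hp) hs hs]
  simp only [dataScore, momentMatrix_smul_smul, ← mul_inv,
    mul_self_sqrt hl.1.le]

theorem momentMatrix_noiseScore_dataScore (hl : l < 1)
    (hν : HasFiniteFisherInformation volume ν) (hp : HasFiniteFisherInformation volume p) :
    momentMatrix (jointMeasure volume volume (jointDensity l ν p))
      (fun z => noiseScore l ν z.1 z.2) (fun z => dataScore l p z.2) = 0 := by
  have := hν.isProbabilityMeasure
  have := hp.isProbabilityMeasure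
  have hnoise := measurePreserving_interpolationNoise (μ := volume) hl hν.measurable hp.measurable
    fun z => (hν.pos z).le
  have hindep := momentMatrix_prod_eq_zero_of_integral_eq_zero (Q := densityMeasure volume p)
    (v := score p) hν.integrable_score hν.integral_score_eq_zero
  rw [← momentMatrix_comp_measurePreserving hnoise
    hν.integrable_score.aestronglyMeasurable.comp_fst
    hp.integrable_score.aestronglyMeasurable.comp_snd] at hindep
  simp only [noiseScore, dataScore, momentMatrix_smul_smul, hindep, smul_zero]

end InterpolationMoments

section Objective

variable {ι : Type*} [Fintype ι] [DecidableEq ι] {l : ℝ} {ν p : EuclideanSpace ℝ ι → ℝ}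

/-- The control-variate objective `A ↦ E_X[Var(A s₁ + (1 - A) s₂ | X)]`. -/
def cvObjective (l : ℝ) (ν p : EuclideanSpace ℝ ι → ℝ) (A : Matrix ι ι ℝ) : ℝ :=
  expectedConditionalVariance volume volume (jointDensity l ν p) fun z =>
    Matrix.toEuclideanLin A (noiseScore l ν z.1 z.2) +
      Matrix.toEuclideanLin (1 - A) (dataScore l p z.2)

theorem cvObjective_eq_add_traceQuadratic (hl : l ∈ Set.Ioo (0 : ℝ) 1)
    (hν : HasFiniteFisherInformation volume ν) (hp : HasFiniteFisherInformation volume p)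
    (A : Matrix ι ι ℝ) :
    cvObjective l ν p A =
      expectedConditionalVariance volume volume (jointDensity l ν p)
        (fun z => dataScore l p z.2) +
      traceQuadratic ((1 - l)⁻¹ • scoreCovariance ν + l⁻¹ • scoreCovariance p)
        (l⁻¹ • scoreCovariance p) A := by
  have hs₁ := memLp_noiseScore hl.2 hν hp
  have hs₂ := memLp_dataScore hl.2 hν hp
  have hdiff : MemLp (fun z : EuclideanSpace ℝ ι × EuclideanSpace ℝ ι =>
      noiseScore l ν z.1 z.2 - dataScore l p z.2) 2
      (jointMeasure volume volume (jointDensity l ν p)) := hs₁.sub hs₂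
  have huncorr := momentMatrix_noiseScore_dataScore hl.2 hν hp
  have hcentred : ∀ᵐ x, ∫ y, jointDensity l ν p x y •
      Matrix.toEuclideanLin A (noiseScore l ν x y - dataScore l p y) = 0 := by
    filter_upwards [integrable_jointDensity_smul_noiseScore_sub_dataScore_ae hl.2 hν hp,
      integral_jointDensity_smul_noiseScore_sub_dataScore_ae hl hν hp] with x hint hzero
    have hcomm :=
      (LinearMap.toContinuousLinearMap (Matrix.toEuclideanLin A)).integral_comp_comm hint
    simpa only [hzero, LinearMap.coe_toContinuousLinearMap', map_smul, map_zero] using hcomm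
  have hsplit (x y : EuclideanSpace ℝ ι) :
      Matrix.toEuclideanLin A (noiseScore l ν x y) +
        Matrix.toEuclideanLin (1 - A) (dataScore l p y) =
      dataScore l p y + Matrix.toEuclideanLin A (noiseScore l ν x y - dataScore l p y) := by
    simp only [map_sub, LinearMap.sub_apply, Matrix.toLpLin_one, LinearMap.id_apply]
    abel
  simp only [cvObjective, hsplit]
  rw [expectedConditionalVariance_add_of_condMean_eq_zero
      (measurable_jointDensity hν.measurable hp.measurable) (jointDensity_pos hl.2 hν.pos hp.pos)
      (integrable_jointDensity hl.2 hν hp) hs₂ (memLp_toEuclideanLin hdiff A) hcentred,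
    integral_inner_toEuclideanLin_add_norm_sq hs₂ hdiff,
    momentMatrix_sub_sub_of_uncorrelated hs₁ hs₂ huncorr,
    momentMatrix_sub_right_of_uncorrelated hs₁ hs₂ huncorr, neg_neg,
    momentMatrix_noiseScore hl.2 hν hp, momentMatrix_dataScore hl hν hp]

theorem optimal_matrix_cv_schedule_general (hl : l ∈ Set.Ioo (0 : ℝ) 1)
    (hν : HasFiniteFisherInformation volume ν) (hp : HasFiniteFisherInformation volume p)
    (hM : ((1 - l)⁻¹ • scoreCovariance ν + l⁻¹ • scoreCovariance p).PosDef) :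
    (∀ A, cvObjective l ν p (l⁻¹ • (scoreCovariance p *
      ((1 - l)⁻¹ • scoreCovariance ν + l⁻¹ • scoreCovariance p)⁻¹)) ≤ cvObjective l ν p A) ∧
    ConvexOn ℝ Set.univ (cvObjective l ν p) := by
  have hquad := funext (cvObjective_eq_add_traceQuadratic hl hν hp)
  have hunit := (Matrix.isUnit_iff_isUnit_det _).1 hM.isUnit
  rw [hquad]
  refine ⟨fun A => (add_le_add_iff_left _).2 (traceQuadratic_le hM.posSemidef ?_ A),
    (convexOn_const _ convex_univ).add (convexOn_traceQuadratic hM.posSemidef _)⟩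
  rw [← Matrix.smul_mul, Matrix.nonsing_inv_mul_cancel_right _ _ hunit]

end Objective

/-- **Optimal matrix control-variate schedule and convexity of the objective.** -/
theorem optimal_matrix_cv_schedule
    (d : ℕ) (l : ℝ) (hl : l ∈ Set.Ioo (0 : ℝ) 1)
    (ν p : EuclideanSpace ℝ (Fin d) → ℝ)
    (hν : ContDiff ℝ (⊤ : ℕ∞) ν) (hp : ContDiff ℝ (⊤ : ℕ∞) p)
    (hνpos : ∀ z, 0 < ν z) (hppos : ∀ z, 0 < p z)
    (hνprob : ∫ z, ν z = 1) (hpprob : ∫ z, p z = 1)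
    (μ : EuclideanSpace ℝ (Fin d) → ℝ)
    (hμ : ∀ x, μ x =
      ∫ y, (1 - l) ^ (-(d : ℝ) / 2) *
        ν ((Real.sqrt (1 - l))⁻¹ • (x - Real.sqrt l • y)) * p y)
    (ϱ : EuclideanSpace ℝ (Fin d) → EuclideanSpace ℝ (Fin d) → ℝ)
    (hϱ : ∀ x y, ϱ x y =
      (1 - l) ^ (-(d : ℝ) / 2) *
        ν ((Real.sqrt (1 - l))⁻¹ • (x - Real.sqrt l • y)) * p y / μ x)
    (s1 : EuclideanSpace ℝ (Fin d) → EuclideanSpace ℝ (Fin d) → EuclideanSpace ℝ (Fin d))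
    (s2 : EuclideanSpace ℝ (Fin d) → EuclideanSpace ℝ (Fin d))
    (hs1 : ∀ x y, s1 x y = (Real.sqrt (1 - l))⁻¹ •
      gradient (fun z => Real.log (ν z))
        ((Real.sqrt (1 - l))⁻¹ • (x - Real.sqrt l • y)))
    (hs2 : ∀ y, s2 y = (Real.sqrt l)⁻¹ • gradient (fun z => Real.log (p z)) y)
    -- the score covariance matrices, assumed positive definite
    (Iν Ip : Matrix (Fin d) (Fin d) ℝ)
    (hIν : ∀ i j, Iν i j = ∫ z, ν z *
      (gradient (fun w => Real.log (ν w)) z i *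
        gradient (fun w => Real.log (ν w)) z j))
    (hIp : ∀ i j, Ip i j = ∫ z, p z *
      (gradient (fun w => Real.log (p w)) z i *
        gradient (fun w => Real.log (p w)) z j))
    (hIνpd : Iν.PosDef) (hIppd : Ip.PosDef)
    -- Stein double-expectation identities (may be assumed)
    (hA : ∀ i j, (∫ x, μ x * ∫ y, ϱ x y * (s1 x y i * (s1 x y j - s2 y j))) =
      (1 - l)⁻¹ * Iν i j)
    (hB : ∀ i j, (∫ x, μ x * ∫ y, ϱ x y * (s2 y i * (s1 x y j - s2 y j))) =
      -(l⁻¹ * Ip i j))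
    -- both identities are unbiased for the score (equal conditional means)
    (hmean : ∀ x, (∫ y, ϱ x y • s1 x y) = ∫ y, ϱ x y • s2 y)
    -- the expected-variance objective over matrices
    (F : Matrix (Fin d) (Fin d) ℝ → ℝ)
    (hF : ∀ A : Matrix (Fin d) (Fin d) ℝ, F A = ∫ x, μ x *
      ((∫ y, ϱ x y * ‖Matrix.toEuclideanLin A (s1 x y) +
          Matrix.toEuclideanLin ((1 : Matrix (Fin d) (Fin d) ℝ) - A) (s2 y)‖ ^ 2) -
        ‖∫ y, ϱ x y • (Matrix.toEuclideanLin A (s1 x y) +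
          Matrix.toEuclideanLin ((1 : Matrix (Fin d) (Fin d) ℝ) - A) (s2 y))‖ ^ 2)) :
    (∀ A : Matrix (Fin d) (Fin d) ℝ,
      F (l⁻¹ • (Ip * ((1 - l)⁻¹ • Iν + l⁻¹ • Ip)⁻¹)) ≤ F A) ∧
    ConvexOn ℝ Set.univ F := by
  obtain rfl : Iν = scoreCovariance ν := Matrix.ext hIν
  obtain rfl : Ip = scoreCovariance p := Matrix.ext hIp
  have hνfin := hasFiniteFisherInformation_of_posDef (hν.differentiable (by simp))
    hνpos hνprob hIνpd
  have hpfin := hasFiniteFisherInformation_of_posDef (hp.differentiable (by simp))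
    hppos hpprob hIppd
  have hμq : μ = marginalDensity volume (jointDensity l ν p) := funext fun x => by
    simp only [hμ, marginalDensity, jointDensity, interpolationNoise, finrank_euclideanSpace_fin]
  have hϱq : ϱ = conditionalDensity volume (jointDensity l ν p) := funext₂ fun x y => by
    simp only [hϱ, hμq, conditionalDensity, jointDensity, interpolationNoise,
      finrank_euclideanSpace_fin]
  obtain rfl : s1 = noiseScore l ν := funext₂ hs1
  obtain rfl : s2 = dataScore l p := funext hs2
  obtain rfl : F = cvObjective l ν p := funext fun A => by
    simp only [hF, hμq, hϱq]
    rfl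
  exact optimal_matrix_cv_schedule_general hl hνfin hpfin
    ((hIνpd.smul (inv_pos.2 (sub_pos.2 hl.2))).add (hIppd.smul (inv_pos.2 hl.1)))
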